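/- Let Y and X₁,…,X_m be {−1,+1}-valued random variables on a common probability space, with error indicators E_j = 1{X_j ≠ Y}. If the random vector (E₁,…,E_m) is independent of Y, then for every subset S ⊆ {1,…,m} and j ∉ S one has Λ_j(S) = 0, and consequently I(Y; X_j | X_S) = I(Y; X_j) − I(X_j; X_S) + I(E_j; E_S). -/

import Mathlib

open MeasureTheory ProbabilityTheory

/-- Shannon entropy (in nats) of a discrete random variable `X`:
`H(X) = ∑ₐ -P(X = a) log P(X = a)`, with the convention `0 log 0 = 0`. -/
noncomputable def shannonEntropy {Ω : Type*} [MeasureSpace Ω] {A : Type*}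
    (X : Ω → A) : ℝ :=
  ∑' a : A, Real.negMulLog ((ℙ {ω | X ω = a}).toReal)

/-- Shannon mutual information of discrete random variables:
`I(X;Y) = H(X) + H(Y) - H(X,Y)`. -/
noncomputable def mutualInfo {Ω : Type*} [MeasureSpace Ω] {A B : Type*}
    (X : Ω → A) (Y : Ω → B) : ℝ :=
  shannonEntropy X + shannonEntropy Y - shannonEntropy (fun ω => (X ω, Y ω))

/-- Conditional mutual information of discrete random variables:
`I(X;Y|Z) = H(X,Z) + H(Y,Z) - H(X,Y,Z) - H(Z)`. -/
noncomputable def condMutualInfo {Ω : Type*} [MeasureSpace Ω] {A B C : Type*}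
    (X : Ω → A) (Y : Ω → B) (Z : Ω → C) : ℝ :=
  shannonEntropy (fun ω => (X ω, Z ω)) + shannonEntropy (fun ω => (Y ω, Z ω))
    - shannonEntropy (fun ω => (X ω, Y ω, Z ω)) - shannonEntropy Z

/-- Conditional entropy of discrete random variables: `H(X|Z) = H(X,Z) - H(Z)`. -/
noncomputable def condEntropy {Ω : Type*} [MeasureSpace Ω] {A C : Type*}
    (X : Ω → A) (Z : Ω → C) : ℝ :=
  shannonEntropy (fun ω => (X ω, Z ω)) - shannonEntropy Z

/-- The error indicator of a prediction `X` against the label `Y`: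
`E = 1` if `X ≠ Y` and `E = 0` otherwise. -/
def errInd {Ω : Type*} (Y X : Ω → ℤ) (ω : Ω) : ℕ :=
  if X ω ≠ Y ω then 1 else 0

theorem shannonEntropy_comp_injective {Ω : Type*} [MeasureSpace Ω] {A B : Type*}
    (X : Ω → A) (g : A → B) (hg : Set.InjOn g (Set.range X))
    (Z : Ω → B) (hZ : ∀ ω, Z ω = g (X ω)) :
    shannonEntropy Z = shannonEntropy X := by
  have hz : Function.support (fun a => Real.negMulLog ((ℙ {ω | X ω = a}).toReal))
      ⊆ Set.range X := by
    intro a ha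
    by_contra h
    apply ha
    have : {ω | X ω = a} = ∅ := by
      ext ω
      simp only [Set.mem_ofPred_eq, Set.mem_empty_iff_false, iff_false]
      intro h'
      exact h ⟨ω, h'⟩
    simp [this]
  have hz2 : Function.support (fun a => Real.negMulLog ((ℙ {ω | Z ω = a}).toReal)) ⊆ Set.range Z := by
    intro a ha
    by_contra h
    apply ha
    have : {ω | Z ω = a} = ∅ := by
      ext ω
      simp only [Set.mem_ofPred_eq, Set.mem_empty_iff_false, iff_false]
      intro h'
      exact h ⟨ω, h'⟩
    simp [this]
  unfold shannonEntropy
  rw [← tsum_subtype_eq_of_support_subset hz]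
  have hinj : Function.Injective (fun a : Set.range X => g a.1) := fun a b h =>
    Subtype.ext (hg a.2 b.2 h)
  rw [← hinj.tsum_eq]
  · apply tsum_congr
    rintro ⟨a, ω₀, rfl⟩
    congr 3
    ext ω
    simp only [Set.mem_ofPred_eq, hZ]
    exact ⟨fun h => hg ⟨ω, rfl⟩ ⟨ω₀, rfl⟩ h, fun h => by rw [h]⟩
  · intro b hb
    obtain ⟨ω, rfl⟩ := hz2 hb
    exact ⟨⟨X ω, ω, rfl⟩, (hZ ω).symm⟩

theorem shannonEntropy_congr_ker {Ω : Type*} [MeasureSpace Ω] {A B : Type*}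
    (X : Ω → A) (Z : Ω → B) (h : ∀ ω ω', X ω = X ω' ↔ Z ω = Z ω') :
    shannonEntropy Z = shannonEntropy X := by
  classical
  by_cases hΩ : Nonempty Ω
  · have hex : ∀ a, ∃ b, ∀ ω, X ω = a → Z ω = b := by
      intro a
      by_cases ha : ∃ ω, X ω = a
      · obtain ⟨ω, rfl⟩ := ha
        exact ⟨Z ω, fun ω' h' => (h _ _).1 h'⟩
      · exact ⟨Z hΩ.some, fun ω hω => (ha ⟨ω, hω⟩).elim⟩
    choose g hg using hex
    have hZ : ∀ ω, Z ω = g (X ω) := fun ω => hg _ _ rfl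
    refine shannonEntropy_comp_injective X g ?_ Z hZ
    rintro _ ⟨ω, rfl⟩ _ ⟨ω', rfl⟩ e
    rw [← hZ, ← hZ] at e
    exact (h _ _).2 e
  · have := not_nonempty_iff.1 hΩ
    have h0 : ∀ s : Set Ω, s = ∅ := fun s => Set.eq_empty_of_isEmpty s
    simp [shannonEntropy, h0]

theorem shannonEntropy_eq_sum {Ω : Type*} [MeasureSpace Ω] {A : Type*}
    (X : Ω → A) (s : Finset A) (hs : ∀ ω, X ω ∈ s) :
    shannonEntropy X = ∑ a ∈ s, Real.negMulLog ((ℙ {ω | X ω = a}).toReal) := by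
  unfold shannonEntropy
  apply tsum_eq_sum
  intro a ha
  have : {ω | X ω = a} = ∅ := by
    ext ω
    simp only [Set.mem_ofPred_eq, Set.mem_empty_iff_false, iff_false]
    rintro rfl
    exact ha (hs ω)
  simp [this]

theorem sum_fibers_one {Ω : Type*} [MeasureSpace Ω] [IsProbabilityMeasure (ℙ : Measure Ω)]
    {A : Type*} [MeasurableSpace A] [MeasurableSingletonClass A]
    (X : Ω → A) (hX : Measurable X) (s : Finset A) (hs : ∀ ω, X ω ∈ s) :
    ∑ a ∈ s, (ℙ {ω | X ω = a}).toReal = 1 := by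
  have h := sum_measureReal_preimage_singleton (μ := (ℙ : Measure Ω)) s (f := X)
    (fun y _ => hX (measurableSet_singleton y))
  have h2 : X ⁻¹' (s : Set A) = Set.univ := by
    ext ω; simp [hs ω]
  rw [h2] at h
  simpa [Measure.real, Set.preimage] using h

theorem shannonEntropy_pair_indep {Ω : Type*} [MeasureSpace Ω]
    [IsProbabilityMeasure (ℙ : Measure Ω)]
    {A B : Type*} [MeasurableSpace A] [MeasurableSingletonClass A]
    [MeasurableSpace B] [MeasurableSingletonClass B]
    (U : Ω → A) (V : Ω → B) (hU : Measurable U) (hV : Measurable V)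
    (fU : (Set.range U).Finite) (fV : (Set.range V).Finite) (h : IndepFun U V ℙ) :
    shannonEntropy (fun ω => (U ω, V ω)) = shannonEntropy U + shannonEntropy V := by
  have hs : ∀ ω, U ω ∈ fU.toFinset := fun ω => by simp
  have ht : ∀ ω, V ω ∈ fV.toFinset := fun ω => by simp
  rw [shannonEntropy_eq_sum U _ hs, shannonEntropy_eq_sum V _ ht,
    shannonEntropy_eq_sum (fun ω => (U ω, V ω)) (fU.toFinset ×ˢ fV.toFinset)
      (fun ω => Finset.mem_product.2 ⟨hs ω, ht ω⟩), Finset.sum_product]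
  have key : ∀ a b, (ℙ {ω | (U ω, V ω) = (a, b)}).toReal
      = (ℙ {ω | U ω = a}).toReal * (ℙ {ω | V ω = b}).toReal := by
    intro a b
    have := h.measure_inter_preimage_eq_mul {a} {b}
      (measurableSet_singleton a) (measurableSet_singleton b)
    rw [← ENNReal.toReal_mul]
    congr 1
    convert this using 2 <;> try rfl
    ext ω; simp
  simp only [key, Real.negMulLog_mul, Finset.sum_add_distrib, ← Finset.mul_sum, ← Finset.sum_mul]
  rw [sum_fibers_one U hU _ hs, sum_fibers_one V hV _ ht]
  ring

theorem errInd_eq_iff {Ω : Type*} (Y X : Ω → ℤ)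
    (hY : ∀ ω, Y ω = 1 ∨ Y ω = -1) (hX : ∀ ω, X ω = 1 ∨ X ω = -1) (ω ω' : Ω)
    (h : Y ω = Y ω') : errInd Y X ω = errInd Y X ω' ↔ X ω = X ω' := by
  unfold errInd
  rcases hY ω with a | a <;> rcases hX ω with b | b <;> rcases hX ω' with c | c <;>
    rw [← h, a, b, c] <;> decide

/-- **Decomposition under label-invariant errors.**
Let `Y` and `X₁,…,X_m` be `{-1,+1}`-valued random variables with error indicators
`E_j = 1{X_j ≠ Y}`.  If the random vector `(E₁,…,E_m)` is independent of `Y`, then for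
every `S ⊆ {1,…,m}` and `j ∉ S` the correction term `Λ_j(S)` vanishes and
`I(Y;X_j|X_S) = I(Y;X_j) - I(X_j;X_S) + I(E_j;E_S)`. -/
theorem decomposition_label_invariant
    {Ω : Type*} [MeasureSpace Ω] [IsProbabilityMeasure (ℙ : Measure Ω)]
    {m : ℕ} (Y : Ω → ℤ) (X : Fin m → Ω → ℤ)
    (hYm : Measurable Y) (hXm : ∀ j, Measurable (X j))
    (hYval : ∀ ω, Y ω = 1 ∨ Y ω = -1)
    (hXval : ∀ j ω, X j ω = 1 ∨ X j ω = -1)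
    (hEindep : IndepFun (fun ω => fun i : Fin m => errInd Y (X i) ω) Y ℙ) :
    ∀ (S : Finset (Fin m)) (j : Fin m), j ∉ S →
      (condMutualInfo (errInd Y (X j)) Y
            (fun ω => fun i : {i : Fin m // i ∈ S} => errInd Y (X i.1) ω)
          - mutualInfo (errInd Y (X j)) Y) = 0 ∧
      condMutualInfo Y (X j) (fun ω => fun i : {i : Fin m // i ∈ S} => X i.1 ω)
        = mutualInfo Y (X j)
          - mutualInfo (X j) (fun ω => fun i : {i : Fin m // i ∈ S} => X i.1 ω)
          + mutualInfo (errInd Y (X j))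
              (fun ω => fun i : {i : Fin m // i ∈ S} => errInd Y (X i.1) ω) := by
  intro S j _
  have hEm : ∀ i, Measurable (errInd Y (X i)) := fun i =>
    Measurable.ite (measurableSet_eq_fun (hXm i) hYm).compl measurable_const measurable_const
  have hE : Measurable (fun ω => fun i : Fin m => errInd Y (X i) ω) :=
    measurable_pi_lambda _ hEm
  have fE : (Set.range (fun ω => fun i : Fin m => errInd Y (X i) ω)).Finite := by
    refine Set.Finite.subset (Set.Finite.pi' (t := fun _ : Fin m => ({0, 1} : Set ℕ))
      (fun _ => Set.toFinite _)) ?_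
    rintro _ ⟨ω, rfl⟩ i
    simp only [errInd]
    split_ifs <;> simp
  have fY : (Set.range Y).Finite := by
    refine (Set.toFinite ({1, -1} : Set ℤ)).subset ?_
    rintro _ ⟨ω, rfl⟩
    exact hYval ω
  have main : ∀ {B : Type} [MeasurableSpace B] [MeasurableSingletonClass B]
      (φ : (Fin m → ℕ) → B), Measurable φ →
      shannonEntropy (fun ω => (φ (fun i => errInd Y (X i) ω), Y ω))
        = shannonEntropy (fun ω => φ (fun i => errInd Y (X i) ω)) + shannonEntropy Y := by
    intro B _ _ φ hφ
    refine shannonEntropy_pair_indep _ Y (hφ.comp hE) hYm ?_ fY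
      (hEindep.comp hφ measurable_id)
    exact (fE.image φ).subset (by rintro _ ⟨ω, rfl⟩; exact ⟨_, ⟨ω, rfl⟩, rfl⟩)
  have e1 := main (fun e => e j) (by fun_prop)
  have e2 := main (fun e => fun i : {i : Fin m // i ∈ S} => e i.1) (by fun_prop)
  have e3 := main (fun e => (e j, fun i : {i : Fin m // i ∈ S} => e i.1)) (by fun_prop)
  have hX := fun i => errInd_eq_iff Y (X i) hYval (hXval i)
  have k1 : shannonEntropy (fun ω => (Y ω, X j ω))
      = shannonEntropy (fun ω => (errInd Y (X j) ω, Y ω)) := by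
    apply shannonEntropy_congr_ker
    intro ω ω'
    have := hX j ω ω'
    simp only [Prod.mk.injEq]
    tauto
  have k2 : shannonEntropy
        (fun ω => (Y ω, fun i : {i : Fin m // i ∈ S} => errInd Y (X i.1) ω))
      = shannonEntropy
        (fun ω => ((fun i : {i : Fin m // i ∈ S} => errInd Y (X i.1) ω), Y ω)) := by
    apply shannonEntropy_congr_ker
    intro ω ω'
    simp only [Prod.mk.injEq]
    tauto
  have hS : ∀ ω ω', Y ω = Y ω' →
      ((fun i : {i : Fin m // i ∈ S} => errInd Y (X i.1) ω)
        = (fun i : {i : Fin m // i ∈ S} => errInd Y (X i.1) ω') ↔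
      (fun i : {i : Fin m // i ∈ S} => X i.1 ω)
        = (fun i : {i : Fin m // i ∈ S} => X i.1 ω')) := by
    intro ω ω' h
    simp only [funext_iff]
    exact forall_congr' fun i => hX i.1 ω ω' h
  have k3 : shannonEntropy (fun ω => (Y ω, fun i : {i : Fin m // i ∈ S} => X i.1 ω))
      = shannonEntropy
        (fun ω => ((fun i : {i : Fin m // i ∈ S} => errInd Y (X i.1) ω), Y ω)) := by
    apply shannonEntropy_congr_ker
    intro ω ω'
    have := hS ω ω'
    simp only [Prod.mk.injEq]
    tauto
  have k4 : shannonEntropy (fun ω => (errInd Y (X j) ω, Y ω,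
        fun i : {i : Fin m // i ∈ S} => errInd Y (X i.1) ω))
      = shannonEntropy (fun ω => ((errInd Y (X j) ω,
        fun i : {i : Fin m // i ∈ S} => errInd Y (X i.1) ω), Y ω)) := by
    apply shannonEntropy_congr_ker
    intro ω ω'
    simp only [Prod.mk.injEq]
    tauto
  have k5 : shannonEntropy (fun ω => (Y ω, X j ω,
        fun i : {i : Fin m // i ∈ S} => X i.1 ω))
      = shannonEntropy (fun ω => ((errInd Y (X j) ω,
        fun i : {i : Fin m // i ∈ S} => errInd Y (X i.1) ω), Y ω)) := by
    apply shannonEntropy_congr_ker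
    intro ω ω'
    have h1 := hS ω ω'
    have h2 := hX j ω ω'
    simp only [Prod.mk.injEq]
    tauto
  have eta : shannonEntropy (fun ω => errInd Y (X j) ω) = shannonEntropy (errInd Y (X j)) := rfl
  simp only [condMutualInfo, mutualInfo]
  simp only [k1, k2, k3, k4, k5, e1, e2, e3]
  constructor <;> ring
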